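/- arXiv:2002.07975 — 3 statements merged into one kernel-verified Lean document; each statement's English description precedes it below -/
import Mathlib

section
/- Let B be a symmetric positive-definite 2×2 real matrix and set A := B². Let κ ∈ (0, 2π) and α ∈ ℝ, and let D_{κ,α} := { (r cos θ, r sin θ) ∈ ℝ² : r > 0, α − κ/2 < θ < α + κ/2 }. Let R_α be the rotation matrix with rows (cos α, sin α) and (−sin α, cos α), set Ā := R_α A R_αᵀ, and write ā := Ā₁₁, b̄ := Ā₁₂, c̄ := Ā₂₂. Then the two-dimensional Lebesgue measure of (B⁻¹ D_{κ,α}) ∩ B₁(0) equals (1/2)·( π − arctan( (c̄·cot(κ/2) − b̄)/√(det A) ) − arctan( (c̄·cot(κ/2) + b̄)/√(det A) ) ). -/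
/-!
Reading angles off the rotated coordinates `x ↦ R_α x` reduces the claim to the area of
`{z | M z ∈ sector κ 0}` in the unit disc, with `M = R_α B` and `M Mᵀ = Ā`. Up to the null ray
`θ = 0` this region consists of two mirror images, each the preimage of an angular sector
`0 < θ < κ / 2` under a matrix, namely `M` or its composition with a reflection.

Two matrices with the same Gram matrix `M Mᵀ` differ by an orthogonal factor on the right, which
preserves area and disc. So `M` may be replaced by an upper triangular matrix with the same Gram
matrix. That matrix fixes the direction of the positive first axis and acts on the cotangent of
the other bounding angle by an affine map, so each half is a genuine circular sector.
-/

open Real MeasureTheory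

/-- The planar angular sector of central angle `κ` around direction `α`. -/
def sector (κ α : ℝ) : Set (Fin 2 → ℝ) :=
  {x | ∃ r θ : ℝ, 0 < r ∧ α - κ / 2 < θ ∧ θ < α + κ / 2 ∧
    x = ![r * Real.cos θ, r * Real.sin θ]}

/-- The open unit disc in the plane. -/
def unitDisc : Set (Fin 2 → ℝ) := {x | x 0 ^ 2 + x 1 ^ 2 < 1}

section

open Set
open scoped Matrix

section MulVec

variable {ι : Type*} [Fintype ι] [DecidableEq ι]

theorem image_inv_mulVec_eq_preimage {R : Type*} [CommRing R] {B : Matrix ι ι R} (hB : IsUnit B.det)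
    (S : Set (ι → R)) : (B⁻¹ *ᵥ ·) '' S = (B *ᵥ ·) ⁻¹' S := by
  have hleft : Function.LeftInverse (B *ᵥ ·) (B⁻¹ *ᵥ ·) := fun x ↦ by
    simp only [Matrix.mulVec_mulVec, Matrix.mul_nonsing_inv B hB, Matrix.one_mulVec]
  have hright : Function.RightInverse (B *ᵥ ·) (B⁻¹ *ᵥ ·) := fun x ↦ by
    simp only [Matrix.mulVec_mulVec, Matrix.nonsing_inv_mul B hB, Matrix.one_mulVec]
  exact congrFun (image_eq_preimage_of_inverse hleft hright) S

theorem quasiMeasurePreserving_mulVec {M : Matrix ι ι ℝ} (hM : IsUnit M.det) :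
    Measure.QuasiMeasurePreserving (M *ᵥ ·) (volume : Measure (ι → ℝ)) volume :=
  Measure.LinearMap.quasiMeasurePreserving volume (Matrix.toLin' M)
    (by simpa using hM.ne_zero)

theorem volume_preimage_mulVec_of_mem_orthogonalGroup {O : Matrix ι ι ℝ}
    (hO : O ∈ Matrix.orthogonalGroup ι ℝ) (S : Set (ι → ℝ)) :
    volume ((O *ᵥ ·) ⁻¹' S) = volume S := by
  have hsq : O.det * O.det = 1 := by
    simpa using congrArg Matrix.det ((Matrix.mem_orthogonalGroup_iff ι ℝ).1 hO)
  have habs : |O.det| = 1 := by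
    rcases mul_self_eq_one_iff.1 hsq with h | h <;> simp [h]
  have hdet : LinearMap.det (Matrix.toLin' O) ≠ 0 := by
    rw [LinearMap.det_toLin']
    exact left_ne_zero_of_mul_eq_one hsq
  simpa [abs_inv, habs] using! Measure.addHaar_preimage_linearMap volume hdet S

theorem mulVec_dotProduct_mulVec_of_mem_orthogonalGroup {R : Type*} [CommRing R] {O : Matrix ι ι R}
    (hO : O ∈ Matrix.orthogonalGroup ι R) (x : ι → R) : (O *ᵥ x) ⬝ᵥ (O *ᵥ x) = x ⬝ᵥ x := by
  rw [Matrix.dotProduct_mulVec, Matrix.vecMul_mulVec, (Matrix.mem_orthogonalGroup_iff' ι R).1 hO,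
    Matrix.vecMul_one]

theorem inv_mul_mem_orthogonalGroup {R : Type*} [CommRing R] {M N : Matrix ι ι R}
    (hN : IsUnit N.det) (h : M * Mᵀ = N * Nᵀ) : N⁻¹ * M ∈ Matrix.orthogonalGroup ι R := by
  rw [Matrix.mem_orthogonalGroup_iff]
  calc N⁻¹ * M * (N⁻¹ * M)ᵀ = N⁻¹ * (M * Mᵀ) * N⁻¹ᵀ := by
        simp only [Matrix.transpose_mul, Matrix.mul_assoc]
    _ = (N⁻¹ * N) * (N⁻¹ * N)ᵀ := by
        rw [h]; simp only [Matrix.transpose_mul, Matrix.mul_assoc]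
    _ = 1 := by rw [Matrix.nonsing_inv_mul N hN, Matrix.transpose_one, mul_one]

theorem volume_preimage_mulVec_inter_radial_congr {M N : Matrix ι ι ℝ} (hN : IsUnit N.det)
    (h : M * Mᵀ = N * Nᵀ) (S : Set (ι → ℝ)) (C : Set ℝ) :
    volume ((M *ᵥ ·) ⁻¹' S ∩ {x | x ⬝ᵥ x ∈ C}) =
      volume ((N *ᵥ ·) ⁻¹' S ∩ {x | x ⬝ᵥ x ∈ C}) := by
  have hO := inv_mul_mem_orthogonalGroup hN h
  rw [← volume_preimage_mulVec_of_mem_orthogonalGroup hO ((N *ᵥ ·) ⁻¹' S ∩ _)]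
  congr 1
  ext x
  simp only [mem_inter_iff, mem_preimage, mem_ofPred_eq, Matrix.mulVec_mulVec,
    Matrix.mul_nonsing_inv_cancel_left N M hN,
    mulVec_dotProduct_mulVec_of_mem_orthogonalGroup hO]

end MulVec

theorem unitDisc_eq_dotProduct_self : unitDisc = {x | x ⬝ᵥ x ∈ Iio 1} := by
  ext x
  simp [unitDisc, sq]

theorem volume_preimage_mulVec_inter_unitDisc_congr {M N : Matrix (Fin 2) (Fin 2) ℝ}
    (hN : IsUnit N.det) (h : M * Mᵀ = N * Nᵀ) (S : Set (Fin 2 → ℝ)) :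
    volume ((M *ᵥ ·) ⁻¹' S ∩ unitDisc) = volume ((N *ᵥ ·) ⁻¹' S ∩ unitDisc) := by
  rw [unitDisc_eq_dotProduct_self]
  exact volume_preimage_mulVec_inter_radial_congr hN h S _

theorem measurableSet_unitDisc : MeasurableSet unitDisc :=
  (isOpen_lt (by fun_prop) continuous_const : IsOpen unitDisc).measurableSet

/-- The matrix of the rotation of the plane by the angle `-α`. -/
noncomputable def clockwiseRotation (α : ℝ) : Matrix (Fin 2) (Fin 2) ℝ :=
  !![cos α, sin α; -sin α, cos α]

theorem clockwiseRotation_neg (α : ℝ) : clockwiseRotation (-α) = (clockwiseRotation α)ᵀ := by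
  ext i j
  fin_cases i <;> fin_cases j <;> simp [clockwiseRotation]

theorem clockwiseRotation_mul_transpose (α : ℝ) :
    clockwiseRotation α * (clockwiseRotation α)ᵀ = 1 := by
  ext i j
  fin_cases i <;> fin_cases j <;>
    simp [clockwiseRotation, Matrix.mul_apply, Fin.sum_univ_two, ← sq, mul_comm]

theorem det_clockwiseRotation (α : ℝ) : (clockwiseRotation α).det = 1 := by
  simp [clockwiseRotation, Matrix.det_fin_two_of, ← sq]

theorem clockwiseRotation_mulVec_polar (α r θ : ℝ) :
    clockwiseRotation α *ᵥ ![r * cos θ, r * sin θ] =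
      ![r * cos (θ - α), r * sin (θ - α)] := by
  ext i
  fin_cases i <;> simp [clockwiseRotation, cos_sub, sin_sub] <;> ring

theorem preimage_clockwiseRotation_sector (κ α β : ℝ) :
    (clockwiseRotation α *ᵥ ·) ⁻¹' sector κ β = sector κ (β + α) := by
  ext x
  constructor
  · rintro ⟨r, θ, hr, hlo, hhi, hx⟩
    refine ⟨r, θ + α, hr, by linarith, by linarith, ?_⟩
    have hinv : clockwiseRotation (-α) *ᵥ (clockwiseRotation α *ᵥ x) = x := by
      rw [clockwiseRotation_neg, Matrix.mulVec_mulVec,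
        mul_eq_one_comm.1 (clockwiseRotation_mul_transpose α), Matrix.one_mulVec]
    rw [← hinv, show clockwiseRotation α *ᵥ x = _ from hx, clockwiseRotation_mulVec_polar,
      sub_neg_eq_add]
  · rintro ⟨r, θ, hr, hlo, hhi, rfl⟩
    exact ⟨r, θ - α, hr, by linarith, by linarith, clockwiseRotation_mulVec_polar α r θ⟩

theorem volume_polarCoord_symm_image_Ioo_prod {Θ : Set ℝ} (hΘ : MeasurableSet Θ)
    (hΘπ : Θ ⊆ Ioo (-π) π) :
    volume (polarCoord.symm '' (Ioo 0 1 ×ˢ Θ)) = ENNReal.ofReal (1 / 2) * volume Θ := by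
  have hinj : InjOn polarCoord.symm (Ioo 0 1 ×ˢ Θ) :=
    polarCoord.symm.injOn.mono (prod_mono Ioo_subset_Ioi_self hΘπ)
  have hradial : ∫⁻ r in Ioo (0 : ℝ) 1, ENNReal.ofReal |r| = ENNReal.ofReal (1 / 2) := by
    have hint : IntegrableOn (fun r : ℝ ↦ r) (Ioo 0 1) :=
      continuous_id.integrableOn_Icc.mono_set Ioo_subset_Icc_self
    have hnonneg : ∀ᵐ r ∂volume.restrict (Ioo (0 : ℝ) 1), 0 ≤ r :=
      ae_restrict_of_forall_mem measurableSet_Ioo fun r hr ↦ hr.1.le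
    rw [setLIntegral_congr_fun measurableSet_Ioo fun r hr ↦ by rw [abs_of_pos hr.1],
      ← ofReal_integral_eq_lintegral_ofReal hint hnonneg, ← integral_Ioc_eq_integral_Ioo,
      ← intervalIntegral.integral_of_le zero_le_one]
    simp
  rw [← lintegral_abs_det_fderiv_eq_addHaar_image volume (measurableSet_Ioo.prod hΘ)
    (fun p _ ↦ (hasFDerivAt_polarCoord_symm p).hasFDerivWithinAt) hinj]
  simp only [det_fderivPolarCoordSymm]
  rw [Measure.volume_eq_prod, setLIntegral_prod _ (by fun_prop)]
  simp only [lintegral_const, Measure.restrict_apply_univ]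
  rw [lintegral_mul_const _ (by fun_prop), hradial]

theorem sector_inter_unitDisc_eq_polarCoord_symm_image (κ α : ℝ) :
    sector κ α ∩ unitDisc = MeasurableEquiv.finTwoArrow ⁻¹'
      (polarCoord.symm '' (Ioo 0 1 ×ˢ Ioo (α - κ / 2) (α + κ / 2))) := by
  have hnorm (r θ : ℝ) : (r * cos θ) ^ 2 + (r * sin θ) ^ 2 = r ^ 2 := by
    linear_combination r ^ 2 * sin_sq_add_cos_sq θ
  ext x
  constructor
  · rintro ⟨⟨r, θ, hr, hlo, hhi, rfl⟩, hx⟩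
    have hr1 : r < 1 := by
      rw [← sq_lt_one_iff₀ hr.le, ← hnorm r θ]
      exact hx
    exact ⟨(r, θ), ⟨⟨hr, hr1⟩, hlo, hhi⟩, rfl⟩
  · rintro ⟨⟨r, θ⟩, ⟨⟨hr, hr1⟩, hlo, hhi⟩, hx⟩
    obtain rfl : x = ![r * cos θ, r * sin θ] := MeasurableEquiv.finTwoArrow.injective hx.symm
    refine ⟨⟨r, θ, hr, hlo, hhi, rfl⟩, ?_⟩
    simpa [unitDisc, hnorm] using abs_lt.2 ⟨by linarith, hr1⟩

theorem volume_sector_inter_unitDisc {κ : ℝ} (hκ : κ ≤ 2 * π) (α : ℝ) :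
    volume (sector κ α ∩ unitDisc) = ENNReal.ofReal (κ / 2) := by
  have hangles : Ioo (0 - κ / 2) (0 + κ / 2) ⊆ Ioo (-π) π :=
    Ioo_subset_Ioo (by linarith) (by linarith)
  calc volume (sector κ α ∩ unitDisc)
      = volume ((clockwiseRotation α *ᵥ ·) ⁻¹' sector κ 0 ∩ unitDisc) := by
        rw [preimage_clockwiseRotation_sector, zero_add]
    _ = volume (((1 : Matrix (Fin 2) (Fin 2) ℝ) *ᵥ ·) ⁻¹' sector κ 0 ∩ unitDisc) :=
        volume_preimage_mulVec_inter_unitDisc_congr (by simp)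
          (by rw [clockwiseRotation_mul_transpose, Matrix.transpose_one, mul_one]) _
    _ = volume (sector κ 0 ∩ unitDisc) := by simp only [Matrix.one_mulVec, preimage_id']
    _ = ENNReal.ofReal (1 / 2) * volume (Ioo (0 - κ / 2) (0 + κ / 2)) := by
        rw [sector_inter_unitDisc_eq_polarCoord_symm_image,
          (volume_preserving_finTwoArrow ℝ).measure_preimage_equiv,
          volume_polarCoord_symm_image_Ioo_prod measurableSet_Ioo hangles]
    _ = ENNReal.ofReal (κ / 2) := by
        rw [Real.volume_Ioo, ← ENNReal.ofReal_mul (by norm_num)]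
        congr 1
        ring

/-- The open planar sector between the positive first axis and the ray in the open upper
half-plane whose angle with that axis has cotangent `k`. -/
def upperSector (k : ℝ) : Set (Fin 2 → ℝ) := {x | 0 < x 1 ∧ k * x 1 < x 0}

theorem isOpen_upperSector (k : ℝ) : IsOpen (upperSector k) := by
  have hupper : IsOpen {x : Fin 2 → ℝ | 0 < x 1} := isOpen_lt (by fun_prop) (by fun_prop)
  have hright : IsOpen {x : Fin 2 → ℝ | k * x 1 < x 0} := isOpen_lt (by fun_prop) (by fun_prop)
  exact hupper.inter hright

theorem sin_sub_eq_sin_mul_cos_sub_cot_mul_sin {β : ℝ} (hβ : sin β ≠ 0) (θ : ℝ) :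
    sin (β - θ) = sin β * (cos θ - cot β * sin θ) := by
  rw [sin_sub, cot_eq_cos_div_sin]
  field_simp

theorem polar_mem_upperSector_cot_iff {β r θ : ℝ} (hβ : β ∈ Ioo 0 π) (hr : 0 < r)
    (hθ : θ ∈ Ioo (-π) π) :
    ![r * cos θ, r * sin θ] ∈ upperSector (cot β) ↔ θ ∈ Ioo 0 β := by
  have hsin : 0 < sin β := sin_pos_of_mem_Ioo hβ
  have hmem : ![r * cos θ, r * sin θ] ∈ upperSector (cot β) ↔
      0 < sin θ ∧ 0 < sin (β - θ) := by
    rw [sin_sub_eq_sin_mul_cos_sub_cot_mul_sin hsin.ne', mul_pos_iff_of_pos_left hsin, sub_pos]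
    simp [upperSector, hr, mul_left_comm]
  rw [hmem]
  constructor
  · rintro ⟨hθpos, hβθ⟩
    constructor
    · by_contra! hle
      exact hθpos.not_ge (sin_nonpos_of_nonpos_of_neg_pi_le hle hθ.1.le)
    · by_contra! hle
      exact hβθ.not_ge
        (sin_nonpos_of_nonpos_of_neg_pi_le (by linarith) (by linarith [hβ.1, hθ.2]))
  · rintro ⟨hθpos, hβθ⟩
    exact ⟨sin_pos_of_pos_of_lt_pi hθpos hθ.2,
      sin_pos_of_pos_of_lt_pi (sub_pos.2 hβθ) (by linarith [hβ.2])⟩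

theorem exists_polar_of_snd_ne_zero {x : Fin 2 → ℝ} (hx : x 1 ≠ 0) :
    ∃ r θ : ℝ, 0 < r ∧ θ ∈ Ioo (-π) π ∧ x = ![r * cos θ, r * sin θ] := by
  have hsource : (x 0, x 1) ∈ polarCoord.source := Or.inr hx
  obtain ⟨hr, hθ⟩ := polarCoord.map_source hsource
  refine ⟨_, _, hr, hθ, MeasurableEquiv.finTwoArrow.injective ?_⟩
  exact (polarCoord.left_inv hsource).symm

theorem sector_eq_upperSector_cot {β : ℝ} (hβ : β ∈ Ioo 0 π) :
    sector β (β / 2) = upperSector (cot β) := by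
  ext x
  constructor
  · rintro ⟨r, θ, hr, hlo, hhi, rfl⟩
    exact (polar_mem_upperSector_cot_iff hβ hr ⟨by linarith [pi_pos], by linarith [hβ.2]⟩).2
      ⟨by linarith, by linarith⟩
  · intro hx
    obtain ⟨r, θ, hr, hθ, rfl⟩ := exists_polar_of_snd_ne_zero hx.1.ne'
    obtain ⟨hlo, hhi⟩ := (polar_mem_upperSector_cot_iff hβ hr hθ).1 hx
    exact ⟨r, θ, hr, by linarith, by linarith, rfl⟩

theorem upperSector_eq_sector (m : ℝ) :
    upperSector m = sector (π / 2 - arctan m) ((π / 2 - arctan m) / 2) := by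
  have hcot : cot (π / 2 - arctan m) = m := by
    rw [← inv_inj, cot_inv_eq_tan, tan_pi_div_two_sub, tan_arctan]
  rw [sector_eq_upperSector_cot
    ⟨by linarith [arctan_lt_pi_div_two m], by linarith [neg_pi_div_two_lt_arctan m]⟩, hcot]

theorem volume_upperSector_inter_unitDisc (m : ℝ) :
    volume (upperSector m ∩ unitDisc) = ENNReal.ofReal ((π / 2 - arctan m) / 2) := by
  rw [upperSector_eq_sector]
  exact volume_sector_inter_unitDisc (by linarith [neg_pi_div_two_lt_arctan m, pi_pos]) _

theorem preimage_upperTriangular_upperSector {p s : ℝ} (hp : 0 < p) (hs : 0 < s) (q k : ℝ) :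
    (!![p, q; 0, s] *ᵥ ·) ⁻¹' upperSector k = upperSector ((k * s - q) / p) := by
  ext x
  have hslope : k * (s * x 1) < p * x 0 + q * x 1 ↔ (k * s - q) / p * x 1 < x 0 := by
    rw [div_mul_eq_mul_div, div_lt_iff₀ hp]
    constructor <;> intro h <;> linarith
  simp [upperSector, Matrix.vecHead, Matrix.vecTail, hs, hslope]

/-- The upper triangular matrix `T` with positive diagonal such that `T * Tᵀ = G`, for a
positive definite `2 × 2` matrix `G`. -/
noncomputable def upperCholesky (G : Matrix (Fin 2) (Fin 2) ℝ) : Matrix (Fin 2) (Fin 2) ℝ :=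
  !![√G.det / √(G 1 1), G 0 1 / √(G 1 1); 0, √(G 1 1)]

theorem upperCholesky_mul_transpose {G : Matrix (Fin 2) (Fin 2) ℝ} (hG : G.PosDef) :
    upperCholesky G * (upperCholesky G)ᵀ = G := by
  have hc : 0 < G 1 1 := hG.diag_pos
  have hd : 0 < G.det := hG.det_pos
  have hsymm : G 1 0 = G 0 1 := by simpa using hG.isHermitian.apply 0 1
  have hcorner : √G.det / √(G 1 1) * (√G.det / √(G 1 1)) +
      G 0 1 / √(G 1 1) * (G 0 1 / √(G 1 1)) = G 0 0 := by
    rw [div_mul_div_comm, div_mul_div_comm, mul_self_sqrt hc.le, mul_self_sqrt hd.le,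
      Matrix.det_fin_two, hsymm]
    field_simp
    ring
  have hs : √(G 1 1) ≠ 0 := (sqrt_pos.2 hc).ne'
  ext i j
  fin_cases i <;> fin_cases j <;>
    simp [upperCholesky, Matrix.mul_apply, Fin.sum_univ_two, hcorner, hs, hsymm, hc.le,
      mul_div_cancel₀]

theorem volume_preimage_upperSector_inter_unitDisc {M : Matrix (Fin 2) (Fin 2) ℝ}
    (hM : IsUnit M.det) (k : ℝ) :
    volume ((M *ᵥ ·) ⁻¹' upperSector k ∩ unitDisc) = ENNReal.ofReal ((π / 2 -
      arctan (((M * Mᵀ) 1 1 * k - (M * Mᵀ) 0 1) / √(M * Mᵀ).det)) / 2) := by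
  have hG : (M * Mᵀ).PosDef := by
    simpa using Matrix.PosDef.mul_conjTranspose_self M
      (Matrix.vecMul_injective_iff_isUnit.2 ((Matrix.isUnit_iff_isUnit_det M).2 hM))
  generalize hGM : M * Mᵀ = G at hG ⊢
  have hc : 0 < √(G 1 1) := sqrt_pos.2 hG.diag_pos
  have hd : 0 < √G.det := sqrt_pos.2 hG.det_pos
  have hunit : IsUnit (upperCholesky G).det := by
    simp [upperCholesky, Matrix.det_fin_two_of, hc.ne', hd.ne']
  rw [volume_preimage_mulVec_inter_unitDisc_congr hunit
      (hGM.trans (upperCholesky_mul_transpose hG).symm),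
    upperCholesky, preimage_upperTriangular_upperSector (div_pos hd hc) hc,
    volume_upperSector_inter_unitDisc]
  have hslope : (k * √(G 1 1) - G 0 1 / √(G 1 1)) / (√G.det / √(G 1 1)) =
      (G 1 1 * k - G 0 1) / √G.det := by
    field_simp
    rw [sq_sqrt hG.diag_pos.le]
  rw [hslope]

/-- The matrix of the reflection of the plane in the first axis. -/
def axisReflection : Matrix (Fin 2) (Fin 2) ℝ := !![1, 0; 0, -1]

theorem axisReflection_mulVec (x : Fin 2 → ℝ) : axisReflection *ᵥ x = ![x 0, -x 1] := by
  ext i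
  fin_cases i <;> simp [axisReflection, Matrix.mulVec, dotProduct]

theorem axisReflection_mul_mul_transpose (G : Matrix (Fin 2) (Fin 2) ℝ) :
    axisReflection * G * axisReflectionᵀ = !![G 0 0, -G 0 1; -G 1 0, G 1 1] := by
  ext i j
  fin_cases i <;> fin_cases j <;>
    simp [axisReflection, Matrix.mul_apply, Matrix.vecMul, Matrix.vecHead, Matrix.vecTail]

theorem det_axisReflection : axisReflection.det = -1 := by
  simp [axisReflection]

theorem preimage_axisReflection_sector (κ α : ℝ) :
    (axisReflection *ᵥ ·) ⁻¹' sector κ α = sector κ (-α) := by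
  ext x
  simp only [mem_preimage, axisReflection_mulVec]
  constructor
  · rintro ⟨r, θ, hr, hlo, hhi, hx⟩
    refine ⟨r, -θ, hr, by linarith, by linarith, ?_⟩
    have hx0 : x 0 = r * cos θ := congrFun hx 0
    have hx1 : -x 1 = r * sin θ := congrFun hx 1
    ext i
    fin_cases i
    · simpa using hx0
    · simp [← hx1]
  · rintro ⟨r, θ, hr, hlo, hhi, rfl⟩
    exact ⟨r, -θ, hr, by linarith, by linarith, by simp⟩

theorem sector_zero_ae_eq_union (κ : ℝ) :
    sector κ 0 =ᵐ[volume] (sector (κ / 2) (κ / 4) ∪ sector (κ / 2) (-(κ / 4)) : Set _) := by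
  have hne : ∀ᵐ x : Fin 2 → ℝ, x 1 ≠ 0 := by
    simpa [ae_iff, volume_pi] using
      Measure.pi_hyperplane (fun _ : Fin 2 ↦ (volume : Measure ℝ)) 1 0
  filter_upwards [hne] with x hx
  apply propext
  constructor
  · rintro ⟨r, θ, hr, hlo, hhi, rfl⟩
    rcases lt_trichotomy θ 0 with hθ | rfl | hθ
    · exact Or.inr ⟨r, θ, hr, by linarith, by linarith, rfl⟩
    · simp at hx
    · exact Or.inl ⟨r, θ, hr, by linarith, by linarith, rfl⟩
  · rintro (⟨r, θ, hr, hlo, hhi, rfl⟩ | ⟨r, θ, hr, hlo, hhi, rfl⟩)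
    · exact ⟨r, θ, hr, by linarith, by linarith, rfl⟩
    · exact ⟨r, θ, hr, by linarith, by linarith, rfl⟩

theorem preimage_sector_zero_ae_eq_union {M : Matrix (Fin 2) (Fin 2) ℝ} (hM : IsUnit M.det)
    {κ : ℝ} (hκ : κ ∈ Ioo 0 (2 * π)) :
    (M *ᵥ ·) ⁻¹' sector κ 0 =ᵐ[volume] ((M *ᵥ ·) ⁻¹' upperSector (cot (κ / 2)) ∪
      ((axisReflection * M) *ᵥ ·) ⁻¹' upperSector (cot (κ / 2)) : Set _) := by
  have hhalf : sector (κ / 2) (κ / 4) = upperSector (cot (κ / 2)) := by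
    rw [← sector_eq_upperSector_cot ⟨by linarith [hκ.1], by linarith [hκ.2]⟩]
    congr 1
    ring
  have h := (quasiMeasurePreserving_mulVec hM).preimage_ae_eq (sector_zero_ae_eq_union κ)
  rw [← preimage_axisReflection_sector, hhalf, preimage_union, preimage_preimage] at h
  simpa only [Matrix.mulVec_mulVec] using h

theorem volume_preimage_sector_zero_inter_unitDisc {M : Matrix (Fin 2) (Fin 2) ℝ}
    (hM : IsUnit M.det) {κ : ℝ} (hκ : κ ∈ Ioo 0 (2 * π)) :
    volume ((M *ᵥ ·) ⁻¹' sector κ 0 ∩ unitDisc) = ENNReal.ofReal (1 / 2 * (π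
      - arctan (((M * Mᵀ) 1 1 * cot (κ / 2) - (M * Mᵀ) 0 1) / √(M * Mᵀ).det)
      - arctan (((M * Mᵀ) 1 1 * cot (κ / 2) + (M * Mᵀ) 0 1) / √(M * Mᵀ).det))) := by
  have hJM : IsUnit (axisReflection * M).det := by
    rw [Matrix.det_mul, det_axisReflection]
    exact isUnit_one.neg.mul hM
  have hgram : axisReflection * M * (axisReflection * M)ᵀ =
      axisReflection * (M * Mᵀ) * axisReflectionᵀ := by
    simp only [Matrix.transpose_mul, Matrix.mul_assoc]
  have hdet : (axisReflection * (M * Mᵀ) * axisReflectionᵀ).det = (M * Mᵀ).det := by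
    simp [det_axisReflection]
  have hdisj : Disjoint ((M *ᵥ ·) ⁻¹' upperSector (cot (κ / 2)) ∩ unitDisc)
      (((axisReflection * M) *ᵥ ·) ⁻¹' upperSector (cot (κ / 2)) ∩ unitDisc) := by
    refine disjoint_left.2 fun z hz hz' ↦ ?_
    have hpos : 0 < (M *ᵥ z) 1 := hz.1.1
    have hneg : 0 < ((axisReflection * M) *ᵥ z) 1 := hz'.1.1
    rw [← Matrix.mulVec_mulVec, axisReflection_mulVec] at hneg
    exact hpos.not_gt (neg_pos.1 hneg)
  have hmeas : MeasurableSet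
      (((axisReflection * M) *ᵥ ·) ⁻¹' upperSector (cot (κ / 2)) ∩ unitDisc) :=
    ((isOpen_upperSector _).preimage (by fun_prop)).measurableSet.inter measurableSet_unitDisc
  rw [measure_congr ((preimage_sector_zero_ae_eq_union hM hκ).inter (ae_eq_refl unitDisc)),
    union_inter_distrib_right, measure_union hdisj hmeas,
    volume_preimage_upperSector_inter_unitDisc hM, volume_preimage_upperSector_inter_unitDisc hJM,
    hgram, hdet, axisReflection_mul_mul_transpose,
    ← ENNReal.ofReal_add (half_pos (sub_pos.2 (arctan_lt_pi_div_two _))).le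
      (half_pos (sub_pos.2 (arctan_lt_pi_div_two _))).le]
  congr 1
  simp only [Matrix.of_apply, Matrix.cons_val', Matrix.cons_val_zero, Matrix.cons_val_one,
    Matrix.cons_val_fin_one, sub_neg_eq_add]
  ring

theorem stmt_12_general (B : Matrix (Fin 2) (Fin 2) ℝ) (hB : IsUnit B.det)
    (A : Matrix (Fin 2) (Fin 2) ℝ) (hA : A = B * Bᵀ) (κ α : ℝ) (hκ : κ ∈ Ioo 0 (2 * π))
    (Rα Abar : Matrix (Fin 2) (Fin 2) ℝ) (hR : Rα = !![cos α, sin α; -sin α, cos α])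
    (hAbar : Abar = Rα * A * Rαᵀ) :
    volume ((B⁻¹ *ᵥ ·) '' sector κ α ∩ unitDisc) = ENNReal.ofReal (1 / 2 * (π
      - arctan ((Abar 1 1 * cot (κ / 2) - Abar 0 1) / √A.det)
      - arctan ((Abar 1 1 * cot (κ / 2) + Abar 0 1) / √A.det))) := by
  replace hR : Rα = clockwiseRotation α := hR
  have hdetR : Rα.det = 1 := hR ▸ det_clockwiseRotation α
  have hunit : IsUnit (Rα * B).det := by rwa [Matrix.det_mul, hdetR, one_mul]
  have hgram : Abar = Rα * B * (Rα * B)ᵀ := by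
    rw [hAbar, hA]
    simp only [Matrix.transpose_mul, Matrix.mul_assoc]
  have hdet : A.det = Abar.det := by
    rw [hAbar, Matrix.det_mul, Matrix.det_mul, Matrix.det_transpose, hdetR, one_mul, mul_one]
  have hpre : (B⁻¹ *ᵥ ·) '' sector κ α = ((Rα * B) *ᵥ ·) ⁻¹' sector κ 0 := by
    have hrot := preimage_clockwiseRotation_sector κ α 0
    rw [zero_add, ← hR] at hrot
    rw [image_inv_mulVec_eq_preimage hB, ← hrot, preimage_preimage]
    simp only [Matrix.mulVec_mulVec]
  rw [hpre, hdet, hgram]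
  exact volume_preimage_sector_zero_inter_unitDisc hunit hκ

end

/-- Closed-form value of the Lebesgue measure of `(B⁻¹ D_{κ,α}) ∩ B₁(0)` for a symmetric
positive-definite `B` with `A = B²`, in terms of the entries of `Ā = R_α A R_αᵀ`. -/
theorem stmt_12 (B : Matrix (Fin 2) (Fin 2) ℝ) (hBsymm : B.IsSymm) (hBpos : B.PosDef)
    (A : Matrix (Fin 2) (Fin 2) ℝ) (hA : A = B * B) (κ α : ℝ)
    (hκ : κ ∈ Set.Ioo 0 (2 * π))
    (Rα Abar : Matrix (Fin 2) (Fin 2) ℝ)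
    (hR : Rα = !![Real.cos α, Real.sin α; -Real.sin α, Real.cos α])
    (hAbar : Abar = Rα * A * Rα.transpose) :
    volume ((fun x => B⁻¹.mulVec x) '' sector κ α ∩ unitDisc)
      = ENNReal.ofReal ((1 / 2) *
          (π - Real.arctan ((Abar 1 1 * Real.cot (κ / 2) - Abar 0 1) / Real.sqrt A.det)
             - Real.arctan ((Abar 1 1 * Real.cot (κ / 2) + Abar 0 1) / Real.sqrt A.det))) :=
  stmt_12_general B hBpos.det_pos.ne'.isUnit A (by rw [hA, hBsymm.eq]) κ α hκ Rα Abar hR hAbar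
end

section
/- Let T : ℝ² → ℝ² be an invertible linear map, let κ ∈ (0, 2π) and α ∈ ℝ, and let D_{κ,α} := { (r cos θ, r sin θ) ∈ ℝ² : r > 0, α − κ/2 < θ < α + κ/2 }. Then there exist κ̃ ∈ (0, 2π) and α̃ ∈ ℝ such that T(D_{κ,α}) = D_{κ̃,α̃}; moreover κ̃ = 2 · μ( T(D_{κ,α}) ∩ B₁(0) ), where μ denotes two-dimensional Lebesgue measure and B₁(0) is the open unit disc. -/
/-!
A sector of angle less than `2 * π` is glued from two open convex cones along its central ray. An
invertible linear map sends convex cones to convex cones, and it multiplies the cross product of any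
two vectors by its nonzero determinant; so the images of the two cones again lie on opposite sides
of the image of the central ray. Each has an angle less than `π`, and together they sweep a sector
of angle less than `2 * π`. Cutting first makes it unnecessary to distinguish convex sectors from
non-convex ones. Polar coordinates, injective on a strip of angles of width less than `2 * π`, give
the area.
-/

open Real MeasureTheory

open Set
open scoped Pointwise

section Rays

variable {E F : Type*} [AddCommGroup E] [Module ℝ E] [AddCommGroup F] [Module ℝ F]

/-- The open ray from the origin through `v`. The sum `openRay v + openRay w` is the open convex
cone spanned by `v` and `w`. -/
def openRay (v : E) : Set E := (fun r : ℝ ↦ r • v) '' Ioi 0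

lemma openRay_smul {c : ℝ} (hc : 0 < c) (v : E) : openRay (c • v) = openRay v := by
  ext x
  constructor
  · rintro ⟨r, hr, rfl⟩
    exact ⟨r * c, mul_pos hr hc, mul_smul r c v⟩
  · rintro ⟨r, hr, rfl⟩
    exact ⟨r / c, div_pos hr hc, by simp only [smul_smul, div_mul_cancel₀ r hc.ne']⟩

lemma openRay_eq_of_mem {v w : E} (h : w ∈ openRay v) : openRay w = openRay v := by
  obtain ⟨c, hc, rfl⟩ := h
  exact openRay_smul hc v

lemma image_openRay (f : E →ₗ[ℝ] F) (v : E) : f '' openRay v = openRay (f v) := by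
  simp only [openRay, image_image, map_smul]

/-- The region swept in turning from `u` to `w` through `v`: two open convex cones glued along their
common edge `v`. Neither the orientation nor the convexity of the union is prescribed. -/
def fan (u v w : E) : Set E := (openRay u + openRay v) ∪ openRay v ∪ (openRay v + openRay w)

lemma fan_comm (u v w : E) : fan u v w = fan w v u := by
  simp only [fan, add_comm (openRay v), union_comm, union_left_comm]

lemma image_fan (f : E →ₗ[ℝ] F) (u v w : E) : f '' fan u v w = fan (f u) (f v) (f w) := by
  simp only [fan, image_union, image_add, image_openRay]

end Rays

section Cross

variable {R : Type*} [CommRing R]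

/-- The cross product of two plane vectors, i.e. the determinant of the matrix they form.
Over `ℝ` it is positive when `y` lies counterclockwise from `x`, by an angle less than `π`. -/
def cross (x y : Fin 2 → R) : R := x 0 * y 1 - x 1 * y 0

lemma cross_eq_basisFun_det (x y : Fin 2 → R) :
    cross x y = (Pi.basisFun R (Fin 2)).det ![x, y] := by
  rw [Pi.basisFun_det_apply, Matrix.det_fin_two]
  rfl

lemma cross_map (f : (Fin 2 → R) →ₗ[R] (Fin 2 → R)) (x y : Fin 2 → R) :
    cross (f x) (f y) = LinearMap.det f * cross x y := by
  rw [cross_eq_basisFun_det, cross_eq_basisFun_det, ← Module.Basis.det_comp]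
  congr 1
  ext i j
  fin_cases i <;> rfl

lemma cross_smul_left (c : R) (x y : Fin 2 → R) : cross (c • x) y = c * cross x y := by
  simp only [cross, Pi.smul_apply, smul_eq_mul]
  ring

lemma cross_smul_right (c : R) (x y : Fin 2 → R) : cross x (c • y) = c * cross x y := by
  simp only [cross, Pi.smul_apply, smul_eq_mul]
  ring

lemma cross_add_smul_left (a b : R) (x y : Fin 2 → R) :
    cross (a • x + b • y) y = a * cross x y := by
  simp only [cross, Pi.add_apply, Pi.smul_apply, smul_eq_mul]
  ring

lemma cross_add_smul_right (a b : R) (x y : Fin 2 → R) :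
    cross x (a • x + b • y) = b * cross x y := by
  simp only [cross, Pi.add_apply, Pi.smul_apply, smul_eq_mul]
  ring

lemma cross_swap (x y : Fin 2 → R) : cross y x = -cross x y := by
  simp only [cross]
  ring

lemma cross_smul_add_cross_smul (v w x : Fin 2 → R) :
    cross x w • v + cross v x • w = cross v w • x := by
  ext i
  fin_cases i <;>
  · simp only [cross, Pi.add_apply, Pi.smul_apply, smul_eq_mul, Fin.zero_eta, Fin.mk_one]
    ring

end Cross

lemma mem_openRay_add_openRay_iff {v w x : Fin 2 → ℝ} (hvw : 0 < cross v w) :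
    x ∈ openRay v + openRay w ↔ 0 < cross v x ∧ 0 < cross x w := by
  constructor
  · rintro ⟨_, ⟨a, ha, rfl⟩, _, ⟨b, hb, rfl⟩, rfl⟩
    simp only [cross_add_smul_left, cross_add_smul_right]
    exact ⟨mul_pos hb hvw, mul_pos ha hvw⟩
  · rintro ⟨hvx, hxw⟩
    refine ⟨_, ⟨cross x w / cross v w, div_pos hxw hvw, rfl⟩,
      _, ⟨cross v x / cross v w, div_pos hvx hvw, rfl⟩, ?_⟩
    simp only [div_eq_inv_mul, mul_smul, ← smul_add, cross_smul_add_cross_smul]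
    exact inv_smul_smul₀ hvw.ne' x

/-- The unit vector at angle `θ`. -/
noncomputable def dir (θ : ℝ) : Fin 2 → ℝ := ![cos θ, sin θ]

lemma dir_periodic : Function.Periodic dir (2 * π) := fun θ ↦ by
  simp only [dir, cos_add_two_pi, sin_add_two_pi]

lemma dir_sub_pi (θ : ℝ) : dir (θ - π) = -dir θ := by
  simp [dir, cos_sub_pi, sin_sub_pi]

lemma cross_dir_dir (θ φ : ℝ) : cross (dir θ) (dir φ) = sin (φ - θ) := by
  simp only [cross, dir, Matrix.cons_val_zero, Matrix.cons_val_one, sin_sub]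
  ring

lemma exists_mem_openRay_dir (a : ℝ) {x : Fin 2 → ℝ} (hx : x ≠ 0) :
    ∃ θ ∈ Ioc a (a + 2 * π), x ∈ openRay (dir θ) := by
  set z : ℂ := ⟨x 0, x 1⟩
  have hz0 : z ≠ 0 := by
    contrapose! hx
    ext i
    fin_cases i
    exacts [congrArg Complex.re hx, congrArg Complex.im hx]
  obtain ⟨θ, hθ, hdir⟩ := dir_periodic.exists_mem_Ioc two_pi_pos z.arg a
  refine ⟨θ, hθ, ‖z‖, norm_pos_iff.mpr hz0, ?_⟩
  rw [← hdir]
  ext i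
  fin_cases i
  exacts [Complex.norm_mul_cos_arg z, Complex.norm_mul_sin_arg z]

/-- The union of the open rays at the angles in `s`; for an open interval `s` it is a sector. -/
def angularRegion (s : Set ℝ) : Set (Fin 2 → ℝ) := ⋃ θ ∈ s, openRay (dir θ)

lemma mem_angularRegion {s : Set ℝ} {x : Fin 2 → ℝ} :
    x ∈ angularRegion s ↔ ∃ θ ∈ s, ∃ r : ℝ, 0 < r ∧ r • dir θ = x := by
  simp only [angularRegion, openRay, mem_iUnion₂, exists_prop, mem_image, mem_Ioi]

lemma angularRegion_Ioo (a b : ℝ) : angularRegion (Ioo a b) = sector (b - a) ((a + b) / 2) := by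
  ext x
  rw [mem_angularRegion]
  constructor
  · rintro ⟨θ, ⟨ha, hb⟩, r, hr, rfl⟩
    exact ⟨r, θ, hr, by linarith, by linarith, by simp [dir]⟩
  · rintro ⟨r, θ, hr, ha, hb, rfl⟩
    exact ⟨θ, ⟨by linarith, by linarith⟩, r, hr, by simp [dir]⟩

lemma mem_angularRegion_Ioo_add_pi {a : ℝ} {x : Fin 2 → ℝ} :
    x ∈ angularRegion (Ioo a (a + π)) ↔ 0 < cross (dir a) x := by
  constructor
  · rw [mem_angularRegion]
    rintro ⟨θ, ⟨ha, hb⟩, r, hr, rfl⟩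
    rw [cross_smul_right, cross_dir_dir]
    exact mul_pos hr (sin_pos_of_pos_of_lt_pi (by linarith) (by linarith))
  · intro hx
    obtain ⟨θ, ⟨ha, hb⟩, r, hr, rfl⟩ :=
      exists_mem_openRay_dir a (x := x) (by rintro rfl; simp [cross] at hx)
    rw [cross_smul_right, cross_dir_dir, mul_pos_iff_of_pos_left hr] at hx
    refine mem_angularRegion.mpr ⟨θ, ⟨ha, ?_⟩, r, hr, rfl⟩
    by_contra! hθ
    have := sin_nonneg_of_nonneg_of_le_pi (x := θ - a - π) (by linarith) (by linarith)
    rw [sin_sub_pi] at this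
    linarith

lemma openRay_dir_add_openRay_dir {a b : ℝ} (hab : a < b) (hba : b < a + π) :
    openRay (dir a) + openRay (dir b) = angularRegion (Ioo a b) := by
  have hcross : 0 < cross (dir a) (dir b) := by
    rw [cross_dir_dir]
    exact sin_pos_of_pos_of_lt_pi (by linarith) (by linarith)
  ext x
  rw [mem_openRay_add_openRay_iff hcross, ← mem_angularRegion_Ioo_add_pi, mem_angularRegion,
    mem_angularRegion]
  constructor
  · rintro ⟨⟨θ, ⟨ha, hθ⟩, r, hr, rfl⟩, hb⟩
    rw [cross_smul_left, cross_dir_dir, mul_pos_iff_of_pos_left hr] at hb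
    refine ⟨θ, ⟨ha, ?_⟩, r, hr, rfl⟩
    by_contra! hbθ
    linarith [sin_nonpos_of_nonpos_of_neg_pi_le (x := b - θ) (by linarith) (by linarith)]
  · rintro ⟨θ, ⟨ha, hb⟩, r, hr, rfl⟩
    refine ⟨⟨θ, ⟨ha, by linarith⟩, r, hr, rfl⟩, ?_⟩
    rw [cross_smul_left, cross_dir_dir]
    exact mul_pos hr (sin_pos_of_pos_of_lt_pi (by linarith) (by linarith))

lemma fan_dir {a m b : ℝ} (ham : a < m) (hma : m < a + π) (hmb : m < b) (hbm : b < m + π) :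
    fan (dir a) (dir m) (dir b) = angularRegion (Ioo a b) := by
  have hsplit : Ioo a b = Ioo a m ∪ {m} ∪ Ioo m b := by
    rw [Ioo_union_right ham, Ioc_union_Ioo_eq_Ioo ham.le hmb]
  rw [fan, openRay_dir_add_openRay_dir ham hma, openRay_dir_add_openRay_dir hmb hbm, hsplit]
  simp only [angularRegion, biUnion_union, biUnion_singleton]

lemma exists_fan_eq_angularRegion {u v w : Fin 2 → ℝ} (huv : 0 < cross u v) (hvw : 0 < cross v w) :
    ∃ a b, a < b ∧ b < a + 2 * π ∧ fan u v w = angularRegion (Ioo a b) := by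
  have hv : v ≠ 0 := by
    rintro rfl
    simp [cross] at hvw
  obtain ⟨m, -, c, hc, rfl⟩ := exists_mem_openRay_dir 0 hv
  have hw : w ∈ angularRegion (Ioo m (m + π)) := by
    rw [mem_angularRegion_Ioo_add_pi]
    exact (mul_pos_iff_of_pos_left hc).mp (cross_smul_left c _ w ▸ hvw)
  have hu : u ∈ angularRegion (Ioo (m - π) (m - π + π)) := by
    rw [mem_angularRegion_Ioo_add_pi, dir_sub_pi, ← neg_one_smul ℝ, cross_smul_left,
      neg_one_mul, ← cross_swap]
    exact (mul_pos_iff_of_pos_left hc).mp (cross_smul_right c u _ ▸ huv)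
  obtain ⟨b, ⟨hmb, hbm⟩, hwb⟩ := mem_iUnion₂.mp hw
  obtain ⟨a, ⟨hma, ham⟩, hua⟩ := mem_iUnion₂.mp hu
  refine ⟨a, b, by linarith, by linarith, ?_⟩
  rw [← fan_dir (m := m) (by linarith) (by linarith) hmb hbm, fan, openRay_smul hc,
    openRay_eq_of_mem hua, openRay_eq_of_mem hwb, fan]

lemma exists_image_angularRegion_Ioo_eq {T : (Fin 2 → ℝ) →ₗ[ℝ] (Fin 2 → ℝ)}
    (hT : LinearMap.det T ≠ 0) {a b : ℝ} (hab : a < b) (hba : b < a + 2 * π) :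
    ∃ a' b', a' < b' ∧ b' < a' + 2 * π ∧
      T '' angularRegion (Ioo a b) = angularRegion (Ioo a' b') := by
  set m := (a + b) / 2 with hm
  have hsin : 0 < sin ((b - a) / 2) := sin_pos_of_pos_of_lt_pi (by linarith) (by linarith)
  have ham : cross (T (dir a)) (T (dir m)) = LinearMap.det T * sin ((b - a) / 2) := by
    rw [cross_map, cross_dir_dir, show m - a = (b - a) / 2 by linarith]
  have hmb : cross (T (dir m)) (T (dir b)) = LinearMap.det T * sin ((b - a) / 2) := by
    rw [cross_map, cross_dir_dir, show b - m = (b - a) / 2 by linarith]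
  rw [← fan_dir (m := m) (by linarith) (by linarith) (by linarith) (by linarith), image_fan]
  rcases hT.lt_or_gt with hneg | hpos
  -- An orientation-reversing map swaps the two sides of the central ray.
  · have := mul_neg_of_neg_of_pos hneg hsin
    rw [fan_comm]
    exact exists_fan_eq_angularRegion (by rw [cross_swap]; linarith) (by rw [cross_swap]; linarith)
  · have := mul_pos hpos hsin
    exact exists_fan_eq_angularRegion (by linarith) (by linarith)

lemma injOn_polarCoord_symm {s : Set ℝ} (hs : InjOn Circle.exp s) :
    InjOn polarCoord.symm (Ioi 0 ×ˢ s) := by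
  rintro ⟨r, θ⟩ ⟨hr : 0 < r, hθ⟩ ⟨r', φ⟩ ⟨hr' : 0 < r', hφ⟩ h
  simp only [polarCoord_symm_apply, Prod.mk.injEq] at h
  obtain ⟨hcos, hsin⟩ := h
  have hrr' : r = r' := by
    refine (pow_left_inj₀ hr.le hr'.le two_ne_zero).mp ?_
    calc r ^ 2 = (r * cos θ) ^ 2 + (r * sin θ) ^ 2 := by
          linear_combination -r ^ 2 * sin_sq_add_cos_sq θ
      _ = (r' * cos φ) ^ 2 + (r' * sin φ) ^ 2 := by rw [hcos, hsin]
      _ = r' ^ 2 := by linear_combination r' ^ 2 * sin_sq_add_cos_sq φ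
  subst hrr'
  have hexp : Circle.exp θ = Circle.exp φ := by
    refine Circle.ext (Complex.ext ?_ ?_)
    · simpa using mul_left_cancel₀ hr.ne' hcos
    · simpa using mul_left_cancel₀ hr.ne' hsin
  exact congrArg (Prod.mk r) (hs hθ hφ hexp)

lemma smul_dir_mem_unitDisc_iff {r θ : ℝ} (hr : 0 < r) : r • dir θ ∈ unitDisc ↔ r < 1 := by
  have hsq : (r • dir θ) 0 ^ 2 + (r • dir θ) 1 ^ 2 = r ^ 2 := by
    simp only [dir, Pi.smul_apply, smul_eq_mul, Matrix.cons_val_zero, Matrix.cons_val_one]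
    linear_combination r ^ 2 * sin_sq_add_cos_sq θ
  rw [unitDisc, mem_ofPred_eq, hsq, sq_lt_one_iff₀ hr.le]

lemma angularRegion_inter_unitDisc (s : Set ℝ) :
    angularRegion s ∩ unitDisc =
      MeasurableEquiv.finTwoArrow ⁻¹' (polarCoord.symm '' (Ioo 0 1 ×ˢ s)) := by
  ext x
  rw [mem_inter_iff, mem_angularRegion]
  constructor
  · rintro ⟨⟨θ, hθ, r, hr, rfl⟩, hx⟩
    refine ⟨(r, θ), ⟨⟨hr, (smul_dir_mem_unitDisc_iff hr).mp hx⟩, hθ⟩, ?_⟩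
    simp [dir]
  · rintro ⟨⟨r, θ⟩, ⟨⟨hr, hr1⟩, hθ⟩, hx⟩
    have hx' : r • dir θ = x := MeasurableEquiv.finTwoArrow.injective (by simpa [dir] using hx)
    exact ⟨⟨θ, hθ, r, hr, hx'⟩, hx' ▸ (smul_dir_mem_unitDisc_iff hr).mpr hr1⟩

lemma lintegral_ofReal_abs_Ioo {R : ℝ} (hR : 0 ≤ R) :
    ∫⁻ r in Ioo 0 R, ENNReal.ofReal |r| = ENNReal.ofReal (R ^ 2 / 2) := by
  have hint : IntegrableOn (fun r : ℝ ↦ |r|) (Ioo 0 R) :=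
    (continuous_abs.integrableOn_Icc (a := 0) (b := R)).mono_set Ioo_subset_Icc_self
  rw [← ofReal_integral_eq_lintegral_ofReal hint (ae_of_all _ abs_nonneg),
    setIntegral_congr_fun measurableSet_Ioo fun r hr ↦ abs_of_pos hr.1,
    ← integral_Ioc_eq_integral_Ioo, ← intervalIntegral.integral_of_le hR, integral_id]
  norm_num

lemma volume_angularRegion_inter_unitDisc {s : Set ℝ} (hs : MeasurableSet s)
    (hinj : InjOn Circle.exp s) : volume (angularRegion s ∩ unitDisc) = volume s / 2 := by
  calc volume (angularRegion s ∩ unitDisc)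
      = volume (polarCoord.symm '' (Ioo 0 1 ×ˢ s)) := by
        rw [angularRegion_inter_unitDisc,
          (volume_preserving_finTwoArrow ℝ).measure_preimage_equiv]
    _ = ∫⁻ p in Ioo 0 1 ×ˢ s, ENNReal.ofReal |(fderivPolarCoordSymm p).det| :=
        (lintegral_abs_det_fderiv_eq_addHaar_image volume (measurableSet_Ioo.prod hs)
          (fun p _ ↦ (hasFDerivAt_polarCoord_symm p).hasFDerivWithinAt)
          ((injOn_polarCoord_symm hinj).mono (prod_mono_left Ioo_subset_Ioi_self))).symm
    _ = ∫⁻ r in Ioo (0 : ℝ) 1, ∫⁻ _ in s, ENNReal.ofReal |r| := by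
        simp only [det_fderivPolarCoordSymm]
        rw [Measure.volume_eq_prod, setLIntegral_prod _ (by fun_prop)]
    _ = volume s / 2 := by
        simp only [setLIntegral_const]
        rw [lintegral_mul_const _ (by fun_prop), lintegral_ofReal_abs_Ioo zero_le_one, one_pow,
          ENNReal.ofReal_div_of_pos two_pos, ENNReal.ofReal_one, ENNReal.ofReal_ofNat, one_div,
          ENNReal.div_eq_inv_mul]

/-- The image of a planar sector under an invertible linear map is again a planar sector,
whose central angle is twice the area of its intersection with the unit disc. -/
theorem stmt_13 (T : (Fin 2 → ℝ) →ₗ[ℝ] (Fin 2 → ℝ)) (hT : Function.Bijective T)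
    (κ α : ℝ) (hκ : κ ∈ Set.Ioo 0 (2 * π)) :
    ∃ κ' ∈ Set.Ioo (0 : ℝ) (2 * π), ∃ α' : ℝ,
      T '' sector κ α = sector κ' α' ∧
      κ' = 2 * (volume (T '' sector κ α ∩ unitDisc)).toReal := by
  have hdet : LinearMap.det T ≠ 0 :=
    (T.isUnit_iff_isUnit_det.mp ((Module.End.isUnit_iff T).mpr hT)).ne_zero
  have hsector : sector κ α = angularRegion (Ioo (α - κ / 2) (α + κ / 2)) := by
    rw [angularRegion_Ioo]
    congr 1 <;> ring
  obtain ⟨a, b, hab, hba, himage⟩ := exists_image_angularRegion_Ioo_eq hdet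
    (a := α - κ / 2) (b := α + κ / 2) (by linarith [hκ.1]) (by linarith [hκ.2])
  rw [hsector, himage]
  refine ⟨b - a, ⟨by linarith, by linarith⟩, (a + b) / 2, angularRegion_Ioo a b, ?_⟩
  have hinj : InjOn Circle.exp (Ioo a b) :=
    (Circle.exp_injOn_Ico (by linarith)).mono Ioo_subset_Ico_self
  rw [volume_angularRegion_inter_unitDisc measurableSet_Ioo hinj, volume_Ioo, ENNReal.toReal_div,
    ENNReal.toReal_ofReal (by linarith), ENNReal.toReal_ofNat, mul_div_cancel₀ _ two_ne_zero]
end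

section
/- Let B be a symmetric positive-definite 2×2 real matrix and set A := B². Let κ ∈ (0, 2π) and α ∈ ℝ, let D_{κ,α} := { (r cos θ, r sin θ) ∈ ℝ² : r > 0, α − κ/2 < θ < α + κ/2 }, let R_α be the rotation matrix with rows (cos α, sin α) and (−sin α, cos α), set Ā := R_α A R_αᵀ with entries ā := Ā₁₁, b̄ := Ā₁₂, c̄ := Ā₂₂, and define κ̃ := π − arctan( (c̄·cot(κ/2) + b̄)/√(det A) ) − arctan( (c̄·cot(κ/2) − b̄)/√(det A) ). Then κ̃ ∈ (0, 2π) and there exists α̃ ∈ ℝ such that B⁻¹ D_{κ,α} = D_{κ̃,α̃}. In particular, if κ = π then κ̃ = π. -/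
open Real MeasureTheory

/-!
Let `A = B Bᵀ` and `M = R_α B`, so that `B⁻¹ D_{κ,α} = M⁻¹ D_{κ,0}` and `Ā = M Mᵀ`. With the
Cholesky factorization `Ā = T Tᵀ`, `T` upper triangular with positive diagonal, `M = T Q` for an
orthogonal matrix `Q`, and `Q⁻¹` carries sectors to sectors of the same central angle. The map `T⁻¹`
preserves the direction of the first axis and each of the two half-planes it bounds, so it acts
separately on the upper and the lower part of `D_{κ,0}`. On the cotangents of the angles at which
these parts end, `T⁻¹` acts by affine maps, and the new cotangents are
`(c̄ cot (κ/2) ∓ b̄) / √(det A)`.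
-/

section InverseCotangent

/-- The inverse of the cotangent on `(0, π)`. -/
noncomputable def arccot (x : ℝ) : ℝ :=
  π / 2 - arctan x

lemma arccot_mem_Ioo (x : ℝ) : arccot x ∈ Set.Ioo 0 π := by
  have lower := neg_pi_div_two_lt_arctan x
  have upper := arctan_lt_pi_div_two x
  constructor <;> rw [arccot] <;> linarith

lemma cot_arccot (x : ℝ) : cot (arccot x) = x := by
  rw [arccot, ← tan_inv_eq_cot, tan_pi_div_two_sub, inv_inv, tan_arctan]

lemma arccot_neg (x : ℝ) : arccot (-x) = π - arccot x := by
  rw [arccot, arccot, arctan_neg]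
  ring

end InverseCotangent

section SlopeInequalities

variable {h φ : ℝ}

lemma sin_pos_iff_of_mem_Ioo (hφ : φ ∈ Set.Ioo (-π) π) : 0 < sin φ ↔ 0 < φ := by
  refine ⟨fun hsin => ?_, fun hpos => sin_pos_of_pos_of_lt_pi hpos hφ.2⟩
  by_contra! hneg
  exact hsin.not_ge (sin_nonpos_of_nonpos_of_neg_pi_le hneg hφ.1.le)

lemma sin_nonneg_iff_of_mem_Ioc (hφ : φ ∈ Set.Ioc (-π) π) : 0 ≤ sin φ ↔ 0 ≤ φ := by
  refine ⟨fun hsin => ?_, fun hpos => sin_nonneg_of_nonneg_of_le_pi hpos hφ.2⟩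
  by_contra! hneg
  exact hsin.not_gt (sin_neg_of_neg_of_neg_pi_lt hneg hφ.1)

lemma cot_mul_sin_lt_cos_iff (hh : h ∈ Set.Ioo 0 π) :
    cot h * sin φ < cos φ ↔ 0 < sin (h - φ) := by
  rw [cot_eq_cos_div_sin, div_mul_eq_mul_div, div_lt_iff₀ (sin_pos_of_mem_Ioo hh), sin_sub,
    sub_pos, mul_comm (cos φ)]

lemma lt_iff_cot_mul_sin_lt_cos (hh : h ∈ Set.Ioo 0 π) (hφ : φ ∈ Set.Ioc (-π) π) :
    φ < h ↔ (0 ≤ sin φ → cot h * sin φ < cos φ) := by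
  rw [cot_mul_sin_lt_cos_iff hh, sin_nonneg_iff_of_mem_Ioc hφ]
  rcases lt_or_ge φ 0 with hneg | hnonneg
  · exact iff_of_true (hneg.trans hh.1) fun hge => absurd hge hneg.not_ge
  · have hdiff : h - φ ∈ Set.Ioo (-π) π := ⟨by linarith [hh.1, hφ.2], by linarith [hh.2]⟩
    rw [sin_pos_iff_of_mem_Ioo hdiff, sub_pos, forall_prop_of_true hnonneg]

lemma neg_lt_iff_neg_cot_mul_sin_lt_cos (hh : h ∈ Set.Ioo 0 π) (hφ : φ ∈ Set.Ioc (-π) π) :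
    -h < φ ↔ (sin φ < 0 → -(cot h * sin φ) < cos φ) := by
  rw [← not_le (b := sin φ), sin_nonneg_iff_of_mem_Ioc hφ, not_le, ← mul_neg, ← sin_neg, ← cos_neg,
    cot_mul_sin_lt_cos_iff hh, sub_neg_eq_add]
  rcases lt_or_ge φ 0 with hneg | hnonneg
  · have hsum : h + φ ∈ Set.Ioo (-π) π := ⟨by linarith [hh.1, hφ.1], by linarith [hh.2]⟩
    rw [sin_pos_iff_of_mem_Ioo hsum, neg_lt_iff_pos_add', forall_prop_of_true hneg]
  · exact iff_of_true (by linarith [hh.1]) fun hneg => absurd hneg hnonneg.not_gt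

end SlopeInequalities

section Sectors

open scoped Matrix

lemma exists_polar {x : Fin 2 → ℝ} (hx : x ≠ 0) :
    ∃ r > 0, ∃ φ ∈ Set.Ioc (-π) π, x = ![r * cos φ, r * sin φ] := by
  set z : ℂ := ⟨x 0, x 1⟩
  have hz0 : z ≠ 0 := fun h => hx <| by
    ext i
    fin_cases i
    exacts [congrArg Complex.re h, congrArg Complex.im h]
  refine ⟨‖z‖, norm_pos_iff.2 hz0, z.arg, Complex.arg_mem_Ioc z, ?_⟩
  rw [Complex.norm_mul_cos_arg, Complex.norm_mul_sin_arg]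
  exact (FinVec.etaExpand_eq x).symm

/-- The sector on the left consists of the directions strictly between `-h₂` and `h₁`. -/
lemma mem_sector_iff_cot {h₁ h₂ : ℝ} (hh₁ : h₁ ∈ Set.Ioo 0 π) (hh₂ : h₂ ∈ Set.Ioo 0 π)
    (x : Fin 2 → ℝ) :
    x ∈ sector (h₁ + h₂) ((h₁ - h₂) / 2) ↔
      (0 ≤ x 1 → cot h₁ * x 1 < x 0) ∧ (x 1 < 0 → -(cot h₂ * x 1) < x 0) := by
  have lower : (h₁ - h₂) / 2 - (h₁ + h₂) / 2 = -h₂ := by ring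
  have upper : (h₁ - h₂) / 2 + (h₁ + h₂) / 2 = h₁ := by ring
  have polar {r φ : ℝ} (hr : 0 < r) (hφ : φ ∈ Set.Ioc (-π) π) :
      -h₂ < φ ∧ φ < h₁ ↔ (0 ≤ r * sin φ → cot h₁ * (r * sin φ) < r * cos φ) ∧
        (r * sin φ < 0 → -(cot h₂ * (r * sin φ)) < r * cos φ) := by
    have hsin : r * sin φ < 0 ↔ sin φ < 0 := smul_neg_iff_of_pos_left hr
    rw [and_comm, lt_iff_cot_mul_sin_lt_cos hh₁ hφ, neg_lt_iff_neg_cot_mul_sin_lt_cos hh₂ hφ,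
      mul_left_comm (cot h₁), mul_left_comm (cot h₂), ← mul_neg r, mul_lt_mul_iff_right₀ hr,
      mul_lt_mul_iff_right₀ hr, mul_nonneg_iff_of_pos_left hr, hsin]
  rw [sector, lower, upper]
  constructor
  · rintro ⟨r, θ, hr, hlower, hupper, rfl⟩
    exact (polar hr ⟨by linarith [hh₂.2], by linarith [hh₁.2]⟩).1 ⟨hlower, hupper⟩
  · intro hslopes
    have hx : x ≠ 0 := by
      rintro rfl
      simpa using hslopes.1
    obtain ⟨r, hr, φ, hφ, rfl⟩ := exists_polar hx
    obtain ⟨hlower, hupper⟩ := (polar hr hφ).2 hslopes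
    exact ⟨r, φ, hr, hlower, hupper, rfl⟩

/-- The matrix `R_β` of the change of coordinates to the frame turned by `β`. As a map of the plane
it is the rotation by the angle `-β`. -/
noncomputable def rotationMatrix (β : ℝ) : Matrix (Fin 2) (Fin 2) ℝ :=
  !![cos β, sin β; -sin β, cos β]

lemma det_rotationMatrix (β : ℝ) : (rotationMatrix β).det = 1 := by
  rw [rotationMatrix, Matrix.det_fin_two_of]
  linear_combination sin_sq_add_cos_sq β

lemma rotationMatrix_neg_mul_self (β : ℝ) : rotationMatrix (-β) * rotationMatrix β = 1 := by
  simp [rotationMatrix, Matrix.one_fin_two, ← sq, mul_comm]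

lemma rotationMatrix_mulVec_mem_sector {κ α : ℝ} {x : Fin 2 → ℝ} (β : ℝ) (hx : x ∈ sector κ α) :
    rotationMatrix β *ᵥ x ∈ sector κ (α - β) := by
  obtain ⟨r, θ, hr, hlower, hupper, rfl⟩ := hx
  refine ⟨r, θ - β, hr, by linarith, by linarith, ?_⟩
  ext i
  fin_cases i <;> simp [rotationMatrix, cos_sub, sin_sub] <;> ring

lemma rotationMatrix_mulVec_mem_sector_iff (κ α β : ℝ) (x : Fin 2 → ℝ) :
    rotationMatrix β *ᵥ x ∈ sector κ α ↔ x ∈ sector κ (α + β) := by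
  refine ⟨fun hx => ?_, fun hx => ?_⟩
  · simpa only [Matrix.mulVec_mulVec, rotationMatrix_neg_mul_self, Matrix.one_mulVec,
      sub_neg_eq_add] using rotationMatrix_mulVec_mem_sector (-β) hx
  · simpa only [add_sub_cancel_right] using rotationMatrix_mulVec_mem_sector β hx

/-- The reflection of the plane in the first axis. -/
def reflectionMatrix : Matrix (Fin 2) (Fin 2) ℝ :=
  !![1, 0; 0, -1]

lemma reflectionMatrix_mul_self : reflectionMatrix * reflectionMatrix = 1 := by
  simp [reflectionMatrix, Matrix.one_fin_two]

lemma reflectionMatrix_mulVec_mem_sector {κ α : ℝ} {x : Fin 2 → ℝ} (hx : x ∈ sector κ α) :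
    reflectionMatrix *ᵥ x ∈ sector κ (-α) := by
  obtain ⟨r, θ, hr, hlower, hupper, rfl⟩ := hx
  refine ⟨r, -θ, hr, by linarith, by linarith, ?_⟩
  rw [Matrix.mulVec_fin_two]
  simp [reflectionMatrix]

lemma reflectionMatrix_mulVec_mem_sector_iff (κ α : ℝ) (x : Fin 2 → ℝ) :
    reflectionMatrix *ᵥ x ∈ sector κ α ↔ x ∈ sector κ (-α) := by
  refine ⟨fun hx => ?_, fun hx => ?_⟩
  · simpa only [Matrix.mulVec_mulVec, reflectionMatrix_mul_self, Matrix.one_mulVec]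
      using reflectionMatrix_mulVec_mem_sector hx
  · simpa only [neg_neg] using reflectionMatrix_mulVec_mem_sector hx

lemma exists_eq_rotationMatrix {Q : Matrix (Fin 2) (Fin 2) ℝ}
    (hQ : Q ∈ Matrix.specialOrthogonalGroup (Fin 2) ℝ) : ∃ β, Q = rotationMatrix β := by
  obtain ⟨hdiag, hanti, hunit⟩ := Matrix.mem_specialOrthogonalGroup_fin_two_iff.1 hQ
  have hrow : Q 0 ≠ 0 := fun h => by simp [h] at hunit
  obtain ⟨r, hr, β, -, hβ⟩ := exists_polar hrow
  have hcos : Q 0 0 = r * cos β := congrFun hβ 0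
  have hsin : Q 0 1 = r * sin β := congrFun hβ 1
  have hr1 : r = 1 := by
    rw [hcos, hsin, mul_pow, mul_pow, ← mul_add, cos_sq_add_sin_sq, mul_one] at hunit
    exact (pow_eq_one_iff_of_nonneg hr.le two_ne_zero).1 hunit
  refine ⟨β, ?_⟩
  rw [Matrix.eta_fin_two Q, rotationMatrix, ← hdiag, neg_eq_iff_eq_neg.1 hanti.symm,
    hcos, hsin, hr1, one_mul, one_mul]

lemma reflectionMatrix_mem_orthogonalGroup :
    reflectionMatrix ∈ Matrix.orthogonalGroup (Fin 2) ℝ := by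
  have htranspose : reflectionMatrixᵀ = reflectionMatrix := by
    ext i j
    fin_cases i <;> fin_cases j <;> rfl
  rw [Matrix.mem_orthogonalGroup_iff, htranspose, reflectionMatrix_mul_self]

lemma det_reflectionMatrix : reflectionMatrix.det = -1 := by
  simp [reflectionMatrix]

lemma exists_mulVec_mem_sector_iff_of_mem_orthogonalGroup {Q : Matrix (Fin 2) (Fin 2) ℝ}
    (hQ : Q ∈ Matrix.orthogonalGroup (Fin 2) ℝ) (κ α : ℝ) :
    ∃ α', ∀ x, Q *ᵥ x ∈ sector κ α ↔ x ∈ sector κ α' := by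
  have hdet_sq : Q.det * Q.det = 1 := by
    simpa only [Matrix.det_mul, Matrix.det_transpose, Matrix.det_one]
      using congrArg Matrix.det ((Matrix.mem_orthogonalGroup_iff (Fin 2) ℝ).1 hQ)
  rcases mul_self_eq_one_iff.1 hdet_sq with hdet | hdet
  · obtain ⟨β, rfl⟩ := exists_eq_rotationMatrix
      (Matrix.mem_specialOrthogonalGroup_iff.2 ⟨hQ, hdet⟩)
    exact ⟨α + β, rotationMatrix_mulVec_mem_sector_iff κ α β⟩
  · obtain ⟨β, hβ⟩ : ∃ β, reflectionMatrix * Q = rotationMatrix β :=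
      exists_eq_rotationMatrix <| Matrix.mem_specialOrthogonalGroup_iff.2
        ⟨mul_mem reflectionMatrix_mem_orthogonalGroup hQ, by
          rw [Matrix.det_mul, det_reflectionMatrix, hdet, neg_one_mul, neg_neg]⟩
    refine ⟨-α + β, fun x => ?_⟩
    rw [← rotationMatrix_mulVec_mem_sector_iff, ← hβ, ← Matrix.mulVec_mulVec,
      reflectionMatrix_mulVec_mem_sector_iff, neg_neg]

lemma upperTriangular_mulVec_mem_sector_iff {p m h₁ h₂ : ℝ} (hp : 0 < p) (hm : 0 < m) (q : ℝ)
    (hh₁ : h₁ ∈ Set.Ioo 0 π) (hh₂ : h₂ ∈ Set.Ioo 0 π) (x : Fin 2 → ℝ) :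
    !![p, q; 0, m] *ᵥ x ∈ sector (h₁ + h₂) ((h₁ - h₂) / 2) ↔
      x ∈ sector (arccot ((m * cot h₁ - q) / p) + arccot ((m * cot h₂ + q) / p))
        ((arccot ((m * cot h₁ - q) / p) - arccot ((m * cot h₂ + q) / p)) / 2) := by
  have hupper : cot h₁ * (m * x 1) < p * x 0 + q * x 1 ↔ (m * cot h₁ - q) / p * x 1 < x 0 := by
    rw [div_mul_eq_mul_div, div_lt_iff₀ hp]
    constructor <;> intro h <;> linarith
  have hlower :
      -(cot h₂ * (m * x 1)) < p * x 0 + q * x 1 ↔ -((m * cot h₂ + q) / p * x 1) < x 0 := by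
    rw [div_mul_eq_mul_div, ← neg_div, div_lt_iff₀ hp]
    constructor <;> intro h <;> linarith
  have hx₀ : (!![p, q; 0, m] *ᵥ x) 0 = p * x 0 + q * x 1 := by
    simp [Matrix.mulVec_fin_two !![p, q; 0, m] x]
  have hx₁ : (!![p, q; 0, m] *ᵥ x) 1 = m * x 1 := by
    simp [Matrix.mulVec_fin_two !![p, q; 0, m] x]
  have hside : m * x 1 < 0 ↔ x 1 < 0 := smul_neg_iff_of_pos_left hm
  rw [mem_sector_iff_cot hh₁ hh₂, mem_sector_iff_cot (arccot_mem_Ioo _) (arccot_mem_Ioo _),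
    cot_arccot, cot_arccot, hx₀, hx₁, hupper, hlower, mul_nonneg_iff_of_pos_left hm, hside]

lemma upperTriangular_mul_transpose (p q m : ℝ) :
    !![p, q; 0, m] * !![p, q; 0, m]ᵀ = !![p * p + q * q, q * m; q * m, m * m] := by
  ext i j
  fin_cases i <;> fin_cases j <;> simp [Matrix.mul_apply, Fin.sum_univ_two, mul_comm]

/-- Cholesky factorization, with an upper instead of a lower triangular left factor. -/
lemma exists_eq_upperTriangular_mul_transpose {G : Matrix (Fin 2) (Fin 2) ℝ} (hG : G.PosDef) :
    ∃ p q m : ℝ, 0 < p ∧ 0 < m ∧ G = !![p, q; 0, m] * !![p, q; 0, m]ᵀ := by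
  have hsymm : G 1 0 = G 0 1 := hG.isHermitian.apply 0 1
  have hm : 0 < √(G 1 1) := sqrt_pos.2 hG.diag_pos
  have hmm : √(G 1 1) * √(G 1 1) = G 1 1 := mul_self_sqrt hG.diag_pos.le
  refine ⟨√G.det / √(G 1 1), G 0 1 / √(G 1 1), √(G 1 1), div_pos (sqrt_pos.2 hG.det_pos) hm, hm, ?_⟩
  have hcorner : √G.det / √(G 1 1) * (√G.det / √(G 1 1)) + G 0 1 / √(G 1 1) * (G 0 1 / √(G 1 1)) =
      G 0 0 := by
    rw [div_mul_div_comm, div_mul_div_comm, ← add_div, mul_self_sqrt hG.det_pos.le, hmm,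
      Matrix.det_fin_two, hsymm, sub_add_cancel, mul_div_cancel_right₀ _ hG.diag_pos.ne']
  rw [upperTriangular_mul_transpose, hcorner, div_mul_cancel₀ _ hm.ne', hmm]
  conv_lhs => rw [Matrix.eta_fin_two G, hsymm]

lemma posDef_mul_transpose_of_det_ne_zero {n : Type*} [Fintype n] [DecidableEq n]
    {M : Matrix n n ℝ} (hM : M.det ≠ 0) : (M * Mᵀ).PosDef := by
  rw [← Matrix.conjTranspose_eq_transpose_of_trivial]
  exact .mul_conjTranspose_self M <| Matrix.vecMul_injective_iff_isUnit.2 <|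
    M.isUnit_iff_isUnit_det.2 hM.isUnit

lemma exists_eq_upperTriangular_mul_orthogonal {M : Matrix (Fin 2) (Fin 2) ℝ} (hM : M.det ≠ 0) :
    ∃ p q m : ℝ, 0 < p ∧ 0 < m ∧
      ∃ Q ∈ Matrix.orthogonalGroup (Fin 2) ℝ, M = !![p, q; 0, m] * Q := by
  obtain ⟨p, q, m, hp, hm, hT⟩ :=
    exists_eq_upperTriangular_mul_transpose (posDef_mul_transpose_of_det_ne_zero hM)
  set T : Matrix (Fin 2) (Fin 2) ℝ := !![p, q; 0, m] with hTdef
  have hTunit : IsUnit T.det := by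
    rw [hTdef, Matrix.det_fin_two_of, mul_zero, sub_zero]
    exact (mul_pos hp hm).ne'.isUnit
  refine ⟨p, q, m, hp, hm, T⁻¹ * M, ?_, (T.mul_nonsing_inv_cancel_left M hTunit).symm⟩
  rw [Matrix.mem_orthogonalGroup_iff]
  calc T⁻¹ * M * (T⁻¹ * M)ᵀ = T⁻¹ * (M * Mᵀ) * T⁻¹ᵀ := by
        simp only [Matrix.transpose_mul, Matrix.mul_assoc]
    _ = T⁻¹ * T * (T⁻¹ * T)ᵀ := by
        simp only [hT, Matrix.transpose_mul, Matrix.mul_assoc]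
    _ = 1 := by rw [T.nonsing_inv_mul hTunit, Matrix.transpose_one, Matrix.one_mul]

end Sectors

section TransformedAngle

open scoped Matrix

/-- The central angle `κ̃` of the preimage of a sector of central angle `κ` around the first axis
under a matrix `M` with `M Mᵀ = G`. -/
noncomputable def transformedAngle (G : Matrix (Fin 2) (Fin 2) ℝ) (κ : ℝ) : ℝ :=
  arccot ((G 1 1 * cot (κ / 2) - G 0 1) / √G.det) + arccot ((G 1 1 * cot (κ / 2) + G 0 1) / √G.det)

lemma transformedAngle_mem_Ioo (G : Matrix (Fin 2) (Fin 2) ℝ) (κ : ℝ) :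
    transformedAngle G κ ∈ Set.Ioo 0 (2 * π) := by
  have upper := arccot_mem_Ioo ((G 1 1 * cot (κ / 2) - G 0 1) / √G.det)
  have lower := arccot_mem_Ioo ((G 1 1 * cot (κ / 2) + G 0 1) / √G.det)
  exact ⟨add_pos upper.1 lower.1, by rw [two_mul]; exact add_lt_add upper.2 lower.2⟩

lemma transformedAngle_pi (G : Matrix (Fin 2) (Fin 2) ℝ) : transformedAngle G π = π := by
  rw [transformedAngle, cot_eq_cos_div_sin, cos_pi_div_two, zero_div, mul_zero, zero_sub, zero_add,
    neg_div, arccot_neg, sub_add_cancel]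

lemma transformedAngle_upperTriangular_mul_transpose {p m : ℝ} (hp : 0 < p) (hm : 0 < m)
    (q κ : ℝ) :
    transformedAngle (!![p, q; 0, m] * !![p, q; 0, m]ᵀ) κ =
      arccot ((m * cot (κ / 2) - q) / p) + arccot ((m * cot (κ / 2) + q) / p) := by
  set G : Matrix (Fin 2) (Fin 2) ℝ := !![p, q; 0, m] * !![p, q; 0, m]ᵀ with hG
  have hsqrt : √G.det = p * m := by
    rw [hG, Matrix.det_mul, Matrix.det_transpose, Matrix.det_fin_two_of, mul_zero, sub_zero,
      sqrt_mul_self (mul_pos hp hm).le]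
  have h11 : G 1 1 = m * m := congrFun₂ (upperTriangular_mul_transpose p q m) 1 1
  have h01 : G 0 1 = q * m := congrFun₂ (upperTriangular_mul_transpose p q m) 0 1
  rw [transformedAngle, hsqrt, h11, h01, mul_right_comm, ← sub_mul, ← add_mul,
    mul_div_mul_right _ _ hm.ne', mul_div_mul_right _ _ hm.ne']

lemma exists_mulVec_mem_sector_zero_iff {M : Matrix (Fin 2) (Fin 2) ℝ} (hM : M.det ≠ 0) {κ : ℝ}
    (hκ : κ ∈ Set.Ioo 0 (2 * π)) :
    ∃ α', ∀ x, M *ᵥ x ∈ sector κ 0 ↔ x ∈ sector (transformedAngle (M * Mᵀ) κ) α' := by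
  obtain ⟨p, q, m, hp, hm, Q, hQ, rfl⟩ := exists_eq_upperTriangular_mul_orthogonal hM
  set T : Matrix (Fin 2) (Fin 2) ℝ := !![p, q; 0, m]
  have hgram : T * Q * (T * Q)ᵀ = T * Tᵀ := by
    rw [Matrix.transpose_mul, Matrix.mul_assoc, ← Q.mul_assoc,
      (Matrix.mem_orthogonalGroup_iff (Fin 2) ℝ).1 hQ, Matrix.one_mul]
  have hhalf : κ / 2 ∈ Set.Ioo 0 π := ⟨by linarith [hκ.1], by linarith [hκ.2]⟩
  have hsector := upperTriangular_mulVec_mem_sector_iff hp hm q hhalf hhalf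
  rw [add_halves, sub_self, zero_div] at hsector
  rw [hgram, transformedAngle_upperTriangular_mul_transpose hp hm]
  set h₁ := arccot ((m * cot (κ / 2) - q) / p)
  set h₂ := arccot ((m * cot (κ / 2) + q) / p)
  obtain ⟨α', hα'⟩ := exists_mulVec_mem_sector_iff_of_mem_orthogonalGroup hQ (h₁ + h₂)
    ((h₁ - h₂) / 2)
  exact ⟨α', fun x => by rw [← Matrix.mulVec_mulVec, hsector, hα']⟩

lemma image_nonsing_inv_mulVec {n R : Type*} [Fintype n] [DecidableEq n] [CommRing R]
    {B : Matrix n n R} (hB : IsUnit B.det) (S : Set (n → R)) :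
    (fun x => B⁻¹ *ᵥ x) '' S = (fun x => B *ᵥ x) ⁻¹' S := by
  refine congrFun (Set.image_eq_preimage_of_inverse (fun x => ?_) fun x => ?_) S
  · simp only [Matrix.mulVec_mulVec, B.mul_nonsing_inv hB, Matrix.one_mulVec]
  · simp only [Matrix.mulVec_mulVec, B.nonsing_inv_mul hB, Matrix.one_mulVec]

lemma exists_image_nonsing_inv_mulVec_sector_eq {B : Matrix (Fin 2) (Fin 2) ℝ} (hB : B.det ≠ 0)
    {κ : ℝ} (hκ : κ ∈ Set.Ioo 0 (2 * π)) (α : ℝ) :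
    ∃ α', (fun x => B⁻¹ *ᵥ x) '' sector κ α =
      sector (transformedAngle (rotationMatrix α * (B * Bᵀ) * (rotationMatrix α)ᵀ) κ) α' := by
  have hgram : rotationMatrix α * (B * Bᵀ) * (rotationMatrix α)ᵀ =
      rotationMatrix α * B * (rotationMatrix α * B)ᵀ := by
    simp only [Matrix.transpose_mul, Matrix.mul_assoc]
  have hM : (rotationMatrix α * B).det ≠ 0 := by
    rwa [Matrix.det_mul, det_rotationMatrix, one_mul]
  obtain ⟨α', hα'⟩ := exists_mulVec_mem_sector_zero_iff hM hκ
  refine ⟨α', ?_⟩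
  rw [image_nonsing_inv_mulVec hB.isUnit, hgram]
  ext x
  rw [← hα', ← Matrix.mulVec_mulVec, rotationMatrix_mulVec_mem_sector_iff, zero_add,
    Set.mem_preimage]

end TransformedAngle

theorem stmt_18_general (B : Matrix (Fin 2) (Fin 2) ℝ) (hB : B.det ≠ 0)
    (A : Matrix (Fin 2) (Fin 2) ℝ) (hA : A = B * B.transpose) (κ α : ℝ)
    (hκ : κ ∈ Set.Ioo 0 (2 * π))
    (Rα Abar : Matrix (Fin 2) (Fin 2) ℝ)
    (hR : Rα = !![Real.cos α, Real.sin α; -Real.sin α, Real.cos α])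
    (hAbar : Abar = Rα * A * Rα.transpose) (κ' : ℝ)
    (hκ' : κ' = π - Real.arctan ((Abar 1 1 * Real.cot (κ / 2) + Abar 0 1) / Real.sqrt A.det)
              - Real.arctan ((Abar 1 1 * Real.cot (κ / 2) - Abar 0 1) / Real.sqrt A.det)) :
    κ' ∈ Set.Ioo 0 (2 * π) ∧
      (∃ α' : ℝ, (fun x => B⁻¹.mulVec x) '' sector κ α = sector κ' α') ∧
      (κ = π → κ' = π) := by
  change Rα = rotationMatrix α at hR
  have hdet : Abar.det = A.det := by
    rw [hAbar, hR, Matrix.det_mul, Matrix.det_mul, Matrix.det_transpose, det_rotationMatrix,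
      one_mul, mul_one]
  have hangle : κ' = transformedAngle Abar κ := by
    rw [hκ', transformedAngle, arccot, arccot, hdet]
    ring
  refine ⟨hangle ▸ transformedAngle_mem_Ioo Abar κ, ?_, ?_⟩
  · rw [hangle, hAbar, hR, hA]
    exact exists_image_nonsing_inv_mulVec_sector_eq hB hκ α
  · rintro rfl
    rw [hangle, transformedAngle_pi]

/-- For a symmetric positive-definite `B` with `A = B²`, the image `B⁻¹ D_{κ,α}` of the
sector `D_{κ,α}` is again a sector whose central angle is
`κ̃ = π − arctan((c̄·cot(κ/2) + b̄)/√(det A)) − arctan((c̄·cot(κ/2) − b̄)/√(det A))`,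
where `Ā = R_α A R_αᵀ`, `b̄ = Ā₁₂`, `c̄ = Ā₂₂`; moreover `κ̃ ∈ (0, 2π)` and, if `κ = π`,
then `κ̃ = π`. -/
theorem stmt_18 (B : Matrix (Fin 2) (Fin 2) ℝ) (hBsymm : B.IsSymm) (hBpos : B.PosDef)
    (A : Matrix (Fin 2) (Fin 2) ℝ) (hA : A = B * B) (κ α : ℝ)
    (hκ : κ ∈ Set.Ioo 0 (2 * π))
    (Rα Abar : Matrix (Fin 2) (Fin 2) ℝ)
    (hR : Rα = !![Real.cos α, Real.sin α; -Real.sin α, Real.cos α])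
    (hAbar : Abar = Rα * A * Rα.transpose) (κ' : ℝ)
    (hκ' : κ' = π - Real.arctan ((Abar 1 1 * Real.cot (κ / 2) + Abar 0 1) / Real.sqrt A.det)
              - Real.arctan ((Abar 1 1 * Real.cot (κ / 2) - Abar 0 1) / Real.sqrt A.det)) :
    κ' ∈ Set.Ioo 0 (2 * π) ∧
      (∃ α' : ℝ, (fun x => B⁻¹.mulVec x) '' sector κ α = sector κ' α') ∧
      (κ = π → κ' = π) := by
  have hA' : A = B * B.transpose := by rw [hA, hBsymm.eq]
  exact stmt_18_general B hBpos.det_pos.ne' A hA' κ α hκ Rα Abar hR hAbar κ' hκ'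
end
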